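/- Let E be a separable Banach space and let μ be a centered Gaussian measure on E, i.e. the law of a random element Z of E such that L(Z) is a centered real Gaussian random variable for every continuous linear functional L on E. Then for every Borel set C ⊆ E that is convex and symmetric (C = −C), and every f ∈ E, one has μ(f + C) ≤ μ(C), where f + C = {f + g : g ∈ C}. -/

import Mathlib

open MeasureTheory ProbabilityTheory

lemma bm_one (A B M : Set ℝ) (hA : MeasurableSet A) (hB : MeasurableSet B)
    (hAn : A.Nonempty) (hBn : B.Nonempty)
    (hM : ∀ x ∈ A, ∀ y ∈ B, (2⁻¹ : ℝ) • (x + y) ∈ M) :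
    volume A + volume B ≤ 2 * volume M := by
  have key : ∀ K L : Set ℝ, IsCompact K → IsCompact L → K ⊆ A → L ⊆ B → K.Nonempty → L.Nonempty →
      volume K + volume L ≤ 2 * volume M := by
    intro K L hK hL hKA hLB hKn hLn
    set a := sSup K
    set b := sInf L
    have ha : a ∈ K := hK.sSup_mem hKn
    have hb : b ∈ L := hL.sInf_mem hLn
    have h2 : volume ((fun x : ℝ => (2:ℝ) • x) '' M) = 2 * volume M := by
      have := Measure.addHaar_smul (volume : Measure ℝ) 2 M
      simpa [← Set.image_smul] using this
    have hsub : ((fun x => b + x) '' K) ∪ ((fun x => a + x) '' L) ⊆ (fun x : ℝ => (2:ℝ) • x) '' M := by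
      rintro z (⟨x, hx, rfl⟩ | ⟨y, hy, rfl⟩)
      · exact ⟨_, hM x (hKA hx) b (hLB hb), by simp [add_comm]⟩
      · exact ⟨_, hM a (hKA ha) y (hLB hy), by simp⟩
    have hdis : AEDisjoint volume ((fun x => b + x) '' K) ((fun x => a + x) '' L) := by
      refine measure_mono_null (t := {a + b}) ?_ (by simp)
      rintro z ⟨⟨x, hx, rfl⟩, ⟨y, hy, hxy⟩⟩
      have h1 : x ≤ a := le_csSup hK.bddAbove hx
      have h3 : b ≤ y := csInf_le hL.bddBelow hy
      simp only at hxy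
      simp only [Set.mem_singleton_iff]
      linarith
    have hLm : MeasurableSet ((fun x => a + x) '' L) :=
      (hL.image (by fun_prop)).measurableSet
    have := measure_union₀ hLm.nullMeasurableSet hdis
    rw [← h2]
    refine le_trans (le_of_eq ?_) (measure_mono hsub)
    rw [this]
    simp
  obtain ⟨p, hp⟩ := hAn
  obtain ⟨q, hq⟩ := hBn
  rw [hA.measure_eq_iSup_isCompact, hB.measure_eq_iSup_isCompact]
  simp only [iSup_and']
  refine ENNReal.biSup_add_biSup_le' ⟨∅, by simp⟩ ⟨∅, by simp⟩ ?_
  rintro K ⟨hKA, hK⟩ L ⟨hLB, hL⟩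
  refine le_trans (add_le_add (measure_mono (Set.subset_insert p K))
    (measure_mono (Set.subset_insert q L))) (key _ _ (hK.insert p) (hL.insert q)
      (Set.insert_subset hp hKA) (Set.insert_subset hq hLB) ⟨p, by simp⟩ ⟨q, by simp⟩)

lemma ennreal_amgm (x y z : ENNReal) (h : x + y ≤ 2 * z) : x * y ≤ z ^ 2 := by
  by_cases hz : z = ⊤
  · simp [hz]
  have hxy : x + y ≠ ⊤ := ne_top_of_le_ne_top (by finiteness) h
  have hx : x ≠ ⊤ := fun hh => hxy (by simp [hh])
  have hy : y ≠ ⊤ := fun hh => hxy (by simp [hh])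
  lift x to NNReal using hx
  lift y to NNReal using hy
  lift z to NNReal using hz
  norm_cast at h ⊢
  have h' : (x:ℝ) + y ≤ 2 * z := by exact_mod_cast h
  have : (x:ℝ) * y ≤ z ^ 2 := by
    have := x.2; have := y.2; have := z.2
    nlinarith [sq_nonneg ((x:ℝ) - y), x.coe_nonneg, y.coe_nonneg, z.coe_nonneg]
  exact_mod_cast this

lemma pl_normalized (f g h : ℝ → ℝ) (hf : Measurable f) (hg : Measurable g) (hh : Measurable h)
    (f0 : ∀ x, 0 ≤ f x) (g0 : ∀ x, 0 ≤ g x) (h0 : ∀ x, 0 ≤ h x)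
    (f1 : ∀ x, f x ≤ 1) (g1 : ∀ x, g x ≤ 1)
    (fs : ∀ t < 1, ∃ x, t < f x) (gs : ∀ t < 1, ∃ x, t < g x)
    (H : ∀ x y, f x * g y ≤ h ((2⁻¹ : ℝ) • (x + y)) ^ 2) :
    (∫⁻ x, ENNReal.ofReal (f x)) * (∫⁻ x, ENNReal.ofReal (g x))
      ≤ (∫⁻ x, ENNReal.ofReal (h x)) ^ 2 := by
  apply ennreal_amgm
  rw [lintegral_eq_lintegral_meas_lt _ (ae_of_all _ f0) hf.aemeasurable,
    lintegral_eq_lintegral_meas_lt _ (ae_of_all _ g0) hg.aemeasurable,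
    lintegral_eq_lintegral_meas_lt _ (ae_of_all _ h0) hh.aemeasurable]
  rw [← lintegral_add_left, ← lintegral_const_mul]
  · refine setLIntegral_mono' measurableSet_Ioi fun t ht => ?_
    rw [Set.mem_Ioi] at ht
    by_cases ht1 : t < 1
    · refine bm_one _ _ _ (measurableSet_lt measurable_const hf)
        (measurableSet_lt measurable_const hg) (fs t ht1) (gs t ht1) ?_
      intro x hx y hy
      simp only [Set.mem_ofPred_eq] at hx hy ⊢
      refine lt_of_pow_lt_pow_left₀ 2 (h0 _) (lt_of_lt_of_le ?_ (H x y))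
      nlinarith
    · have e1 : {a | t < f a} = ∅ := by
        ext a; simp; linarith [f1 a]
      have e2 : {a | t < g a} = ∅ := by
        ext a; simp; linarith [g1 a]
      simp [e1, e2]
  · exact Antitone.measurable fun s t hst => measure_mono fun x hx => lt_of_le_of_lt hst hx
  · exact Antitone.measurable fun s t hst => measure_mono fun x hx => lt_of_le_of_lt hst hx

lemma pl_real (f g h : ℝ → ℝ) (hf : Measurable f) (hg : Measurable g) (hh : Measurable h)
    (f0 : ∀ x, 0 ≤ f x) (g0 : ∀ x, 0 ≤ g x) (h0 : ∀ x, 0 ≤ h x) (R : ℝ)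
    (f1 : ∀ x, f x ≤ R) (g1 : ∀ x, g x ≤ R)
    (H : ∀ x y, f x * g y ≤ h ((2⁻¹ : ℝ) • (x + y)) ^ 2) :
    (∫⁻ x, ENNReal.ofReal (f x)) * (∫⁻ x, ENNReal.ofReal (g x))
      ≤ (∫⁻ x, ENNReal.ofReal (h x)) ^ 2 := by
  set a := ⨆ x, f x with ha
  set b := ⨆ x, g x with hb
  have fb : BddAbove (Set.range f) := ⟨R, by rintro _ ⟨x, rfl⟩; exact f1 x⟩
  have gb : BddAbove (Set.range g) := ⟨R, by rintro _ ⟨x, rfl⟩; exact g1 x⟩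
  have fa : ∀ x, f x ≤ a := le_ciSup fb
  have gbb : ∀ x, g x ≤ b := le_ciSup gb
  rcases le_or_gt a 0 with ha0 | ha0
  · have : ∀ x, f x = 0 := fun x => le_antisymm ((fa x).trans ha0) (f0 x)
    simp [this]
  rcases le_or_gt b 0 with hb0 | hb0
  · have : ∀ x, g x = 0 := fun x => le_antisymm ((gbb x).trans hb0) (g0 x)
    simp [this]
  have hc0 : 0 < √(a * b) := by positivity
  have hc2 : √(a * b) ^ 2 = a * b := Real.sq_sqrt (by positivity)
  set c := √(a * b)
  have key := pl_normalized (fun x => a⁻¹ * f x) (fun x => b⁻¹ * g x) (fun x => c⁻¹ * h x)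
    (hf.const_mul _) (hg.const_mul _) (hh.const_mul _)
    (fun x => mul_nonneg (by positivity) (f0 x)) (fun x => mul_nonneg (by positivity) (g0 x))
    (fun x => mul_nonneg (by positivity) (h0 x))
    (fun x => by rw [inv_mul_le_iff₀ ha0]; simpa using fa x)
    (fun x => by rw [inv_mul_le_iff₀ hb0]; simpa using gbb x)
    (fun t ht => by
      obtain ⟨x, hx⟩ := exists_lt_of_lt_ciSup (show a * t < ⨆ x, f x by rw [← ha]; nlinarith)
      exact ⟨x, by rwa [lt_inv_mul_iff₀ ha0]⟩)
    (fun t ht => by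
      obtain ⟨x, hx⟩ := exists_lt_of_lt_ciSup (show b * t < ⨆ x, g x by rw [← hb]; nlinarith)
      exact ⟨x, by rwa [lt_inv_mul_iff₀ hb0]⟩)
    (fun x y => by
      rw [mul_pow, inv_pow, hc2, mul_inv]
      calc a⁻¹ * f x * (b⁻¹ * g y) = a⁻¹ * b⁻¹ * (f x * g y) := by ring
        _ ≤ _ := mul_le_mul_of_nonneg_left (H x y) (by positivity))
  have scale : ∀ (d : ℝ) (k : ℝ → ℝ), Measurable k → 0 < d → (∫⁻ x, ENNReal.ofReal (k x)) =
      ENNReal.ofReal d * ∫⁻ x, ENNReal.ofReal (d⁻¹ * k x) := by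
    intro d k hk hd
    rw [← lintegral_const_mul _ (by fun_prop)]
    refine lintegral_congr fun x => ?_
    rw [← ENNReal.ofReal_mul hd.le]
    congr 1
    field_simp
  rw [scale a f hf ha0, scale b g hg hb0, scale c h hh hc0, mul_mul_mul_comm, mul_pow,
    ← ENNReal.ofReal_mul ha0.le, ← ENNReal.ofReal_pow hc0.le, hc2]
  gcongr

/-- Midpoint Prékopa–Leindler property of a measure. -/
def PL {X : Type*} [AddCommGroup X] [Module ℝ X] [MeasurableSpace X] (μ : Measure X) : Prop :=
  ∀ f g h : X → ENNReal, Measurable f → Measurable g → Measurable h →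
    (∀ x, f x ≤ 1) → (∀ x, g x ≤ 1) → (∀ x, h x ≤ 1) →
    (∀ x y, f x * g y ≤ h ((2⁻¹ : ℝ) • (x + y)) ^ 2) →
    (∫⁻ x, f x ∂μ) * (∫⁻ x, g x ∂μ) ≤ (∫⁻ x, h x ∂μ) ^ 2

lemma PL.map {X Y : Type*} [AddCommGroup X] [Module ℝ X] [MeasurableSpace X]
    [AddCommGroup Y] [Module ℝ Y] [MeasurableSpace Y] {μ : Measure X} (hμ : PL μ)
    (T : X → Y) (hT : Measurable T)
    (hlin : ∀ x y, T ((2⁻¹ : ℝ) • (x + y)) = (2⁻¹ : ℝ) • (T x + T y)) : PL (μ.map T) := by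
  intro f g h hf hg hh f1 g1 h1 H
  rw [lintegral_map hf hT, lintegral_map hg hT, lintegral_map hh hT]
  exact hμ _ _ _ (hf.comp hT) (hg.comp hT) (hh.comp hT) (fun x => f1 _) (fun x => g1 _)
    (fun x => h1 _) (fun x y => by rw [hlin]; exact H _ _)

lemma PL.prod {X Y : Type*} [AddCommGroup X] [Module ℝ X] [MeasurableSpace X]
    [AddCommGroup Y] [Module ℝ Y] [MeasurableSpace Y] {μ : Measure X} {ν : Measure Y}
    [IsProbabilityMeasure μ] [IsProbabilityMeasure ν] (hμ : PL μ) (hν : PL ν) :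
    PL (μ.prod ν) := by
  have le1 : ∀ k : Y → ENNReal, (∀ y, k y ≤ 1) → ∫⁻ y, k y ∂ν ≤ 1 := by
    intro k hk
    calc ∫⁻ y, k y ∂ν ≤ ∫⁻ y, 1 ∂ν := lintegral_mono hk
      _ = 1 := by simp
  intro f g h hf hg hh f1 g1 h1 H
  rw [lintegral_prod _ hf.aemeasurable, lintegral_prod _ hg.aemeasurable,
    lintegral_prod _ hh.aemeasurable]
  refine hμ _ _ _ hf.lintegral_prod_right' hg.lintegral_prod_right' hh.lintegral_prod_right'
    (fun x => le1 _ fun y => f1 _) (fun x => le1 _ fun y => g1 _) (fun x => le1 _ fun y => h1 _) ?_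
  intro x x'
  refine hν _ _ _ (by fun_prop) (by fun_prop) (by fun_prop)
    (fun y => f1 _) (fun y => g1 _) (fun y => h1 _) ?_
  intro y y'
  exact H (x, y) (x', y')

lemma PL_gaussianReal : PL (gaussianReal 0 1) := by
  intro f g h hf hg hh f1 g1 h1 H
  have e : ∀ k : ℝ → ENNReal, Measurable k → (∀ x, k x ≤ 1) → ∫⁻ x, k x ∂(gaussianReal 0 1) =
      ∫⁻ x, ENNReal.ofReal (gaussianPDFReal 0 1 x * (k x).toReal) := by
    intro k hk hk1
    rw [gaussianReal_of_var_ne_zero _ one_ne_zero,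
      lintegral_withDensity_eq_lintegral_mul _ (measurable_gaussianPDF _ _) hk]
    refine lintegral_congr fun x => ?_
    rw [ENNReal.ofReal_mul (gaussianPDFReal_nonneg _ _ _),
      ENNReal.ofReal_toReal (ne_top_of_le_ne_top ENNReal.one_ne_top (hk1 x))]
    rfl
  have c0 : 0 ≤ (√(2 * Real.pi * 1))⁻¹ := by positivity
  have pb : ∀ x, gaussianPDFReal 0 1 x ≤ (√(2 * Real.pi * 1))⁻¹ := by
    intro x
    simp only [gaussianPDFReal, NNReal.coe_one]
    refine mul_le_of_le_one_right c0 ?_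
    rw [Real.exp_le_one_iff]
    have := sq_nonneg (x - 0)
    linarith
  have bd : ∀ k : ℝ → ENNReal, (∀ x, k x ≤ 1) → ∀ x,
      gaussianPDFReal 0 1 x * (k x).toReal ≤ (√(2 * Real.pi * 1))⁻¹ := by
    intro k hk x
    refine le_trans (mul_le_of_le_one_right (gaussianPDFReal_nonneg _ _ _) ?_) (pb x)
    exact ENNReal.toReal_le_of_le_ofReal (by simp) (by simpa using hk x)
  rw [e f hf f1, e g hg g1, e h hh h1]
  have nn : ∀ k : ℝ → ENNReal, ∀ x, 0 ≤ gaussianPDFReal 0 1 x * (k x).toReal := fun k x =>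
    mul_nonneg (gaussianPDFReal_nonneg _ _ _) ENNReal.toReal_nonneg
  refine pl_real _ _ _ (by fun_prop) (by fun_prop) (by fun_prop) (nn f) (nn g) (nn h) _
    (bd f f1) (bd g g1) ?_
  intro x y
  have p : gaussianPDFReal 0 1 x * gaussianPDFReal 0 1 y ≤
      gaussianPDFReal 0 1 ((2⁻¹ : ℝ) • (x + y)) ^ 2 := by
    simp only [gaussianPDFReal, NNReal.coe_one, smul_eq_mul]
    rw [mul_mul_mul_comm, mul_pow, ← Real.exp_add, ← Real.exp_nat_mul, ← sq (√(2 * Real.pi * 1))⁻¹]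
    refine mul_le_mul_of_nonneg_left (Real.exp_le_exp.2 ?_) (by positivity)
    push_cast
    nlinarith [sq_nonneg (x - y)]
  have q : (f x).toReal * (g y).toReal ≤ (h ((2⁻¹ : ℝ) • (x + y))).toReal ^ 2 := by
    rw [← ENNReal.toReal_mul, ← ENNReal.toReal_pow]
    refine ENNReal.toReal_mono ?_ (H x y)
    exact ENNReal.pow_ne_top (ne_top_of_le_ne_top ENNReal.one_ne_top (h1 _))
  rw [mul_mul_mul_comm, mul_pow]
  exact mul_le_mul p q (by positivity) (by positivity)

lemma PL_pi (n : ℕ) : PL (Measure.pi (fun _ : Fin n => gaussianReal 0 1)) := by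
  induction n with
  | zero =>
    intro f g h hf hg hh f1 g1 h1 H
    have e : ∀ k : (Fin 0 → ℝ) → ENNReal,
        ∫⁻ x, k x ∂(Measure.pi (fun _ : Fin 0 => gaussianReal 0 1)) = k 0 := by
      intro k
      have : k = fun _ => k 0 := funext fun x => by rw [Subsingleton.elim x 0]
      rw [this]; simp
    rw [e, e, e]
    simpa using H 0 0
  | succ n ih =>
    have mp := (measurePreserving_piFinSuccAbove (fun _ : Fin (n+1) => gaussianReal 0 1) 0).symm
    rw [← mp.map_eq]
    refine (PL_gaussianReal.prod ih).map _ mp.measurable ?_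
    rintro ⟨x, x'⟩ ⟨y, y'⟩
    ext i
    refine Fin.cases ?_ (fun j => ?_) i <;> simp [MeasurableEquiv.piFinSuccAbove, mul_add]

lemma PL_euclidean {n : ℕ} (ν : Measure (EuclideanSpace ℝ (Fin n))) [IsGaussian ν] : PL ν := by
  classical
  let e := EuclideanSpace.basisFun (Fin n) ℝ
  let S : Matrix (Fin n) (Fin n) ℝ := Matrix.of fun i j => covarianceBilin ν (e i) (e j)
  have hS' : ∀ x : Fin n → ℝ, covarianceBilin ν (WithLp.toLp 2 x) (WithLp.toLp 2 x) =
      x ⬝ᵥ S.mulVec x := by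
    intro x
    have hx : WithLp.toLp 2 x = ∑ i, x i • e i := by
      rw [← e.sum_repr (WithLp.toLp 2 x)]; simp [e]
    rw [hx]
    simp only [map_sum, map_smul, ContinuousLinearMap.sum_apply, ContinuousLinearMap.smul_apply,
      smul_eq_mul, dotProduct, Matrix.mulVec, S, Finset.mul_sum, Matrix.of_apply]
    rw [Finset.sum_comm]
    refine Finset.sum_congr rfl fun i _ => Finset.sum_congr rfl fun j _ => ?_
    ring
  have hS : S.PosSemidef := by
    refine Matrix.PosSemidef.of_dotProduct_mulVec_nonneg ?_ ?_
    · ext i j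
      simp [S, covarianceBilin_comm (e i)]
    · intro x
      simp only [star_trivial]
      rw [← hS']
      exact covarianceBilin_self_nonneg _
  have : ν = multivariateGaussian (∫ x, x ∂ν) S := by
    apply Measure.ext_of_charFun
    ext t
    rw [charFun_multivariateGaussian hS, IsGaussian.charFun_eq']
    rw [← Complex.ofReal_inj.2 (hS' t)]
    simp
  rw [this, multivariateGaussian, ← map_pi_eq_stdGaussian, Measure.map_map (by fun_prop) (by fun_prop)]
  refine (PL_pi n).map _ (by fun_prop) ?_
  intro x y
  simp only [Function.comp]
  rw [WithLp.toLp_smul, WithLp.toLp_add, map_smul, map_add]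
  module

lemma exists_separating (E : Type*) [NormedAddCommGroup E] [NormedSpace ℝ E]
    [TopologicalSpace.SeparableSpace E] :
    ∃ g : ℕ → (E →L[ℝ] ℝ), ∀ x, (∀ n, g n x = 0) → x = 0 := by
  choose g hg1 hg2 using fun n => exists_dual_vector'' ℝ (TopologicalSpace.denseSeq E n)
  refine ⟨g, fun x hx => ?_⟩
  by_contra hne
  have hpos : 0 < ‖x‖ := norm_pos_iff.2 hne
  obtain ⟨n, hn⟩ := (TopologicalSpace.denseRange_denseSeq E).exists_dist_lt x
    (show 0 < ‖x‖ / 2 by positivity)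
  set d := TopologicalSpace.denseSeq E n
  have h1 : ‖d‖ ≤ ‖x - d‖ := by
    have h2 : g n (d - x) = ‖d‖ := by rw [map_sub, hx, sub_zero, hg2]; rfl
    calc ‖d‖ = g n (d - x) := h2.symm
      _ ≤ ‖g n (d - x)‖ := Real.le_norm_self _
      _ ≤ 1 * ‖d - x‖ := (g n).le_of_opNorm_le (hg1 n) _
      _ = ‖x - d‖ := by rw [one_mul, norm_sub_rev]
  rw [dist_eq_norm] at hn
  have h3 : ‖x‖ ≤ ‖x - d‖ + ‖d‖ := by simpa using norm_add_le (x - d) d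
  linarith

lemma compact_case
    {E : Type*} [NormedAddCommGroup E] [NormedSpace ℝ E] [CompleteSpace E]
    [TopologicalSpace.SeparableSpace E]
    [MeasurableSpace E] [BorelSpace E]
    (μ : Measure E) [IsGaussian μ] (K L : Set E) (hK : IsCompact K) (hL : IsCompact L) :
    μ K * μ L ≤ μ ((fun p : E × E => (2⁻¹ : ℝ) • (p.1 + p.2)) '' (K ×ˢ L)) ^ 2 := by
  haveI : SecondCountableTopology E := UniformSpace.secondCountable_of_separable E
  set M := (fun p : E × E => (2⁻¹ : ℝ) • (p.1 + p.2)) '' (K ×ˢ L) with hMdef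
  have hM : IsCompact M := (hK.prod hL).image (by fun_prop)
  obtain ⟨g, hg⟩ := exists_separating E
  let T : ∀ n : ℕ, E →L[ℝ] EuclideanSpace ℝ (Fin n) := fun n =>
    ((EuclideanSpace.equiv (Fin n) ℝ).symm : (Fin n → ℝ) →L[ℝ] EuclideanSpace ℝ (Fin n)).comp
      (ContinuousLinearMap.pi fun i : Fin n => g i)
  have hT : ∀ n x (i : Fin n), T n x i = g i x := fun n x i => rfl
  have hTeq : ∀ n x y, T n x = T n y ↔ ∀ i < n, g i x = g i y := by
    intro n x y
    constructor
    · intro h i hi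
      rw [← hT n x ⟨i, hi⟩, ← hT n y ⟨i, hi⟩, h]
    · intro h
      ext i
      rw [hT, hT, h i i.2]
  let s : ℕ → Set E := fun n => T n ⁻¹' (T n '' M)
  have hcl : ∀ n, IsCompact (T n '' M) := fun n => hM.image (T n).continuous
  have hanti : Antitone s := by
    rintro m n hmn x ⟨y, hy, hxy⟩
    refine ⟨y, hy, ?_⟩
    rw [hTeq] at hxy ⊢
    exact fun i hi => hxy i (hi.trans_le hmn)
  have hinter : ⋂ n, s n = M := by
    apply Set.Subset.antisymm
    · intro x hx
      rw [Set.mem_iInter] at hx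
      choose y hyM hy using hx
      obtain ⟨m, hm, φ, hφ, hlim⟩ := hM.tendsto_subseq hyM
      suffices x - m = 0 by rw [sub_eq_zero.1 this]; exact hm
      refine hg _ fun i => ?_
      have h1 : Filter.Tendsto (fun k => g i (y (φ k))) Filter.atTop (nhds (g i m)) :=
        ((g i).continuous.tendsto m).comp hlim
      have h2 : Filter.Tendsto (fun k => g i (y (φ k))) Filter.atTop (nhds (g i x)) := by
        refine tendsto_const_nhds.congr' ?_
        filter_upwards [Filter.eventually_gt_atTop i] with k hk
        exact (((hTeq _ _ _).1 (hy (φ k))) i (hk.trans_le (hφ.id_le k))).symm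
      rw [map_sub, tendsto_nhds_unique h1 h2, sub_self]
    · exact Set.subset_iInter fun n x hx => ⟨x, hx, rfl⟩
  have hbound : ∀ n, μ K * μ L ≤ μ (s n) ^ 2 := by
    intro n
    have hKn : MeasurableSet (T n '' K) := (hK.image (T n).continuous).measurableSet
    have hLn : MeasurableSet (T n '' L) := (hL.image (T n).continuous).measurableSet
    have hMn : MeasurableSet (T n '' M) := (hcl n).measurableSet
    have ind1 : ∀ (A : Set (EuclideanSpace ℝ (Fin n))) x,
        A.indicator (1 : EuclideanSpace ℝ (Fin n) → ENNReal) x ≤ 1 := fun A x =>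
      Set.indicator_le_self' (by simp) x
    have := PL_euclidean (μ.map (T n)) ((T n '' K).indicator 1) ((T n '' L).indicator 1)
      ((T n '' M).indicator 1) (measurable_one.indicator hKn) (measurable_one.indicator hLn)
      (measurable_one.indicator hMn) (ind1 _) (ind1 _) (ind1 _) (by
        intro x y
        by_cases hx : x ∈ T n '' K
        · by_cases hy : y ∈ T n '' L
          · have : (2⁻¹ : ℝ) • (x + y) ∈ T n '' M := by
              obtain ⟨x, hx, rfl⟩ := hx
              obtain ⟨y, hy, rfl⟩ := hy
              exact ⟨(2⁻¹ : ℝ) • (x + y), ⟨(x, y), ⟨hx, hy⟩, rfl⟩, by simp⟩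
            simp only [Set.indicator_of_mem, hx, hy, this, Pi.one_apply]
            simp
          · simp [hy]
        · simp [hx])
    rw [lintegral_indicator_one hKn, lintegral_indicator_one hLn, lintegral_indicator_one hMn,
      Measure.map_apply (T n).measurable hKn, Measure.map_apply (T n).measurable hLn,
      Measure.map_apply (T n).measurable hMn] at this
    exact le_trans (mul_le_mul' (measure_mono (Set.subset_preimage_image _ _))
      (measure_mono (Set.subset_preimage_image _ _))) this
  have hlim := tendsto_measure_iInter_atTop (μ := μ) (s := s)
    (fun n => ((T n).measurable (hcl n).measurableSet).nullMeasurableSet) hanti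
    ⟨0, measure_ne_top _ _⟩
  rw [hinter] at hlim
  exact ge_of_tendsto' (ENNReal.Tendsto.pow hlim) hbound

theorem anderson_inequality
    {E : Type*} [NormedAddCommGroup E] [NormedSpace ℝ E] [CompleteSpace E]
    [TopologicalSpace.SeparableSpace E]
    [MeasurableSpace E] [BorelSpace E]
    (μ : Measure E) [IsProbabilityMeasure μ]
    (hgauss : ∀ L : E →L[ℝ] ℝ, ∃ v : NNReal, μ.map L = gaussianReal 0 v)
    (C : Set E) (hC_meas : MeasurableSet C) (hC_conv : Convex ℝ C)
    (hC_symm : C = -C) (f : E) :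
    μ ((fun g => f + g) '' C) ≤ μ C := by
  haveI : SecondCountableTopology E := UniformSpace.secondCountable_of_separable E
  haveI : IsGaussian μ := isGaussian_of_map_eq_gaussianReal fun L => ⟨0, hgauss L⟩
  have hneg : μ.map (ContinuousLinearEquiv.neg ℝ : E ≃L[ℝ] E) = μ := by
    apply Measure.ext_of_charFunDual
    ext L
    have := charFunDual_map (μ := μ) ((ContinuousLinearEquiv.neg ℝ : E ≃L[ℝ] E) : E →L[ℝ] E) L
    refine this.trans ?_
    have h2 : L.comp ((ContinuousLinearEquiv.neg ℝ : E ≃L[ℝ] E) : E →L[ℝ] E) = (-1 : ℝ) • L := by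
      ext x; simp
    obtain ⟨v, hv⟩ := hgauss L
    rw [h2, ← charFun_map_eq_charFunDual_smul, charFunDual_eq_charFun_map_one, hv,
      charFun_gaussianReal, charFun_gaussianReal]
    simp
  have himg : (fun g => f + g) '' C = (Homeomorph.addLeft f) '' C := rfl
  have hmeas : MeasurableSet ((fun g => f + g) '' C) := by
    rw [himg]
    exact (Homeomorph.addLeft f).measurableEmbedding.measurableSet_image.2 hC_meas
  rw [hmeas.measure_eq_iSup_isCompact_of_ne_top (measure_ne_top _ _)]
  refine iSup_le fun K => iSup_le fun hKC => iSup_le fun hK => ?_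
  have h1 := compact_case μ K (-K) hK hK.neg
  have h2 : μ (-K) = μ K := by
    conv_rhs => rw [← hneg]
    rw [Measure.map_apply (by fun_prop) hK.measurableSet]
    rfl
  rw [h2, ← sq] at h1
  refine ((ENNReal.pow_le_pow_left_iff two_ne_zero).1 h1).trans (measure_mono ?_)
  rintro _ ⟨⟨x, y⟩, ⟨hx, hy⟩, rfl⟩
  obtain ⟨c, hc, hcx⟩ := hKC hx
  obtain ⟨d, hd, hdy⟩ := hKC hy
  have hd' : -d ∈ C := by rw [hC_symm]; simpa using hd
  have : (2⁻¹ : ℝ) • (x + y) = (2⁻¹ : ℝ) • c + (2⁻¹ : ℝ) • (-d) := by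
    simp only at hcx hdy
    rw [← hcx, ← neg_neg y, ← hdy]
    module
  simp only
  rw [this]
  exact hC_conv hc hd' (by norm_num) (by norm_num) (by norm_num)
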